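/- Let K be a finite extension of Q_p with ring of integers O_K, and let f: O_K^n → C be a Schwartz-Bruhat... [replaced by real statement]: Let f: R^n → R be a Schwartz function with f(0) = 0, and let L ⊂ R^n be a full-rank lattice. Then the function s ↦ ∫₀^∞ Σ_{λ ∈ L} f(tλ) t^s dt/t, which converges absolutely for Re(s) sufficiently large, admits a meromorphic continuation to all of C that is holomorphic at s = 0, with at most a simple pole at s = n with residue equal to the value at 0 of the Fourier transform of f divided by the covolume of L. -/

import Mathlib

open MeasureTheory Filter
open scoped BigOperators

open Set TopologicalSpace UnitAddTorus
open scoped FourierTransform SchwartzMap Topology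

/-!
The periodization of a Schwartz function `f` over `L` descends to a torus, and is the sum of its
Fourier series there: this is Poisson summation. Applied to the dilates of `f` it says that the
theta series `Θ(t) = ∑_{l ∈ L} f(t l)` and the theta series `Θ^∨` of `(L^∨, 𝓕 f)` satisfy
`Θ(1/t) = covol(L)⁻¹ t^n Θ^∨(t)`. As `t → ∞` they converge rapidly to `f 0` and `𝓕 f 0`. Splitting
the Mellin integral of `Θ` at `t = 1` and folding `(0, 1)` onto `(1, ∞)` therefore writes it as an
entire function minus `f 0 / s` plus `covol(L)⁻¹ 𝓕 f 0 / (s - n)`; the first polar term vanishes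
when `f 0 = 0`.
-/

section Torus

variable {ι : Type*}

/-- The half-open unit cube `(0, 1]^ι`, a fundamental domain for `ℤ^ι` in `ℝ^ι`. -/
def unitCube (ι : Type*) : Set (ι → ℝ) := univ.pi fun _ ↦ Ioc 0 1

/-- The covering map `ℝ^ι → (ℝ/ℤ)^ι`. -/
def torusMk (ι : Type*) : C(ι → ℝ, UnitAddTorus ι) where
  toFun x i := (x i : UnitAddCircle)
  continuous_toFun := continuous_pi fun i ↦ (AddCircle.continuous_mk' 1).comp (continuous_apply i)

lemma isQuotientMap_torusMk : Topology.IsQuotientMap (torusMk ι) :=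
  (IsOpenQuotientMap.piMap fun _ : ι ↦
    (QuotientAddGroup.isOpenQuotientMap_mk :
      IsOpenQuotientMap ((↑) : ℝ → UnitAddCircle))).isQuotientMap

lemma torusMk_eq_torusMk_iff {x y : ι → ℝ} :
    torusMk ι x = torusMk ι y ↔ ∃ k : ι → ℤ, y + Int.cast ∘ k = x := by
  have coord (i : ι) : (x i : UnitAddCircle) = y i ↔ ∃ k : ℤ, y i + k = x i := by
    rw [← sub_eq_zero, ← AddCircle.coe_sub, AddCircle.coe_eq_zero_iff]
    simp only [zsmul_one, eq_sub_iff_add_eq']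
  simp only [torusMk, ContinuousMap.coe_mk, funext_iff, coord, Classical.skolem, Pi.add_apply,
    Function.comp_apply]

lemma exists_continuousMap_torus_of_periodic {X : Type*} [TopologicalSpace X] (g : C(ι → ℝ, X))
    (hg : ∀ x (k : ι → ℤ), g (x + Int.cast ∘ k) = g x) :
    ∃ G : C(UnitAddTorus ι, X), ∀ x, G (torusMk ι x) = g x := by
  have factors : Function.FactorsThrough g (torusMk ι) := fun x y hxy ↦ by
    obtain ⟨k, rfl⟩ := torusMk_eq_torusMk_iff.mp hxy
    exact hg y k
  exact ⟨isQuotientMap_torusMk.lift g factors,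
    DFunLike.congr_fun (isQuotientMap_torusMk.lift_comp g factors)⟩

variable [Fintype ι]

lemma mFourier_torusMk (m : ι → ℤ) (x : ι → ℝ) :
    mFourier m (torusMk ι x) = Complex.exp (2 * Real.pi * Complex.I * ∑ i, (m i : ℂ) * x i) := by
  simp only [mFourier, torusMk, ContinuousMap.coe_mk, fourier_coe_apply, ← Complex.exp_sum,
    Finset.mul_sum, Complex.ofReal_one, div_one, mul_assoc]

variable {E : Type*} [NormedAddCommGroup E]

lemma hasSum_setIntegral_unitCube_add_intCast [NormedSpace ℝ E] {f : (ι → ℝ) → E}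
    (hf : Integrable f) :
    HasSum (fun k : ι → ℤ ↦ ∫ x in unitCube ι, f (x + Int.cast ∘ k)) (∫ x, f x) := by
  let cube (k : ι → ℤ) : Set (ι → ℝ) := univ.pi fun i ↦ Ioc (k i : ℝ) (k i + 1)
  have measurable (k : ι → ℤ) : MeasurableSet (cube k) := .univ_pi fun _ ↦ measurableSet_Ioc
  have disjoint : Pairwise (Function.onFun Disjoint cube) := fun k l hkl ↦
    let ⟨i, hi⟩ := Function.ne_iff.mp hkl
    disjoint_univ_pi.mpr ⟨i, pairwise_disjoint_Ioc_intCast ℝ hi⟩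
  have cover : ⋃ k, cube k = univ := by
    simp only [cube, iUnion_univ_pi fun (_ : ι) (n : ℤ) ↦ Ioc (n : ℝ) (n + 1),
      iUnion_Ioc_intCast, pi_univ]
  have preimage_cube (k : ι → ℤ) : (· + (Int.cast ∘ k : ι → ℝ)) ⁻¹' cube k = unitCube ι := by
    ext x
    simp [cube, unitCube, add_comm (x _)]
  have hasSum_cube := hasSum_integral_iUnion measurable disjoint (f := f) hf.integrableOn
  rw [cover, setIntegral_univ] at hasSum_cube
  refine hasSum_cube.congr_fun fun k ↦ ?_
  rw [← preimage_cube k]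
  exact (measurePreserving_add_right volume _).setIntegral_preimage_emb
    (measurableEmbedding_addRight _) f (cube k)

lemma mFourierCoeff_eq_integral_of_eq_tsum {f : (ι → ℝ) → ℂ} (hf : Integrable f)
    {F : UnitAddTorus ι → ℂ} (hF : ∀ x, F (torusMk ι x) = ∑' k : ι → ℤ, f (x + Int.cast ∘ k))
    (m : ι → ℤ) :
    mFourierCoeff F m = ∫ x, mFourier (-m) (torusMk ι x) * f x := by
  let e (x : ι → ℝ) : ℂ := mFourier (-m) (torusMk ι x)
  have e_add (x : ι → ℝ) (k : ι → ℤ) : e (x + Int.cast ∘ k) = e x :=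
    congrArg (mFourier (-m)) (torusMk_eq_torusMk_iff.mpr ⟨k, rfl⟩)
  have integrable_mul : Integrable fun x ↦ e x * f x :=
    hf.bdd_mul (c := 1) ((mFourier (-m)).comp (torusMk ι)).continuous.aestronglyMeasurable
      (ae_of_all _ fun x ↦ ((mFourier (-m)).norm_coe_le_norm _).trans_eq mFourier_norm)
  calc mFourierCoeff F m
    _ = ∫ x in unitCube ι, e x * F (torusMk ι x) := by
      simpa [unitCube, Set.pi] using! mFourierCoeff_eq_integral F m 0
    _ = ∫ x in unitCube ι, ∑' k : ι → ℤ, e (x + Int.cast ∘ k) * f (x + Int.cast ∘ k) := by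
      simp only [hF, e_add, tsum_mul_left]
    _ = ∑' k : ι → ℤ, ∫ x in unitCube ι, e (x + Int.cast ∘ k) * f (x + Int.cast ∘ k) :=
      (hasSum_integral_of_summable_integral_norm
        (fun k ↦ (integrable_mul.comp_add_right (Int.cast ∘ k)).integrableOn)
        (hasSum_setIntegral_unitCube_add_intCast integrable_mul.norm).summable).tsum_eq.symm
    _ = ∫ x, e x * f x := (hasSum_setIntegral_unitCube_add_intCast integrable_mul).tsum_eq

lemma integrable_of_summable_norm_restrict_add_intCast {f : C(ι → ℝ, E)}
    (hf : Summable fun k : ι → ℤ ↦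
      ‖(f.comp (.addRight (Int.cast ∘ k))).restrict (Icc 0 1)‖) : Integrable f := by
  let cube (k : ι → ℤ) : Compacts (ι → ℝ) :=
    ⟨Icc (Int.cast ∘ k) (Int.cast ∘ k + 1), isCompact_Icc⟩
  have volume_cube (k : ι → ℤ) : volume.real (cube k : Set (ι → ℝ)) = 1 := by
    simp [cube, Measure.real, Real.volume_Icc_pi]
  refine integrable_of_summable_norm_restrict (s := cube)
    (hf.of_nonneg_of_le (fun _ ↦ by positivity) fun k ↦ ?_) ?_
  · rw [volume_cube, mul_one, ContinuousMap.norm_le _ (norm_nonneg _)]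
    rintro ⟨x, hx⟩
    have bound := ((f.comp (.addRight (Int.cast ∘ k))).restrict (Icc 0 1)).norm_coe_le_norm
      ⟨x - Int.cast ∘ k, sub_nonneg.mpr hx.1, sub_le_iff_le_add'.mpr hx.2⟩
    simpa only [ContinuousMap.restrict_apply, ContinuousMap.comp_apply, ContinuousMap.coe_addRight,
      sub_add_cancel] using! bound
  · exact eq_univ_of_forall fun x ↦ mem_iUnion.mpr
      ⟨fun i ↦ ⌊x i⌋, fun i ↦ Int.floor_le _, fun i ↦ (Int.lt_floor_add_one _).le⟩

theorem tsum_add_intCast_eq_tsum_mFourier {f : C(ι → ℝ, ℂ)}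
    (hf : ∀ K : Compacts (ι → ℝ), Summable fun k : ι → ℤ ↦
      ‖(f.comp (.addRight (Int.cast ∘ k))).restrict K‖)
    (hf' : Summable fun m : ι → ℤ ↦ ∫ y, mFourier (-m) (torusMk ι y) * f y) (x : ι → ℝ) :
    ∑' k : ι → ℤ, f (x + Int.cast ∘ k) =
      ∑' m : ι → ℤ, (∫ y, mFourier (-m) (torusMk ι y) * f y) * mFourier m (torusMk ι x) := by
  let periodization : C(ι → ℝ, ℂ) := ∑' k : ι → ℤ, f.comp (.addRight (Int.cast ∘ k))
  have periodization_apply (y : ι → ℝ) : periodization y = ∑' k : ι → ℤ, f (y + Int.cast ∘ k) :=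
    (ContinuousMap.tsum_apply (ContinuousMap.summable_of_locally_summable_norm hf) y).symm
  have periodic (y : ι → ℝ) (l : ι → ℤ) : periodization (y + Int.cast ∘ l) = periodization y := by
    simp only [periodization_apply, add_assoc,
      ← (Equiv.addLeft l).tsum_eq fun k : ι → ℤ ↦ f (y + Int.cast ∘ k)]
    refine tsum_congr fun k ↦ congrArg (fun v ↦ f (y + v)) (funext fun i ↦ ?_)
    simp
  obtain ⟨F, hF⟩ := exists_continuousMap_torus_of_periodic periodization periodic
  have coeff (m : ι → ℤ) : mFourierCoeff F m = ∫ y, mFourier (-m) (torusMk ι y) * f y :=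
    mFourierCoeff_eq_integral_of_eq_tsum
      (integrable_of_summable_norm_restrict_add_intCast (hf ⟨Icc 0 1, isCompact_Icc⟩))
      (fun y ↦ (hF y).trans (periodization_apply y)) m
  have inversion := hasSum_mFourier_series_apply_of_summable (f := F)
    (hf'.congr fun m ↦ (coeff m).symm) (torusMk ι x)
  simpa only [hF, periodization_apply, coeff, smul_eq_mul] using inversion.tsum_eq.symm

end Torus

section DualLattice

open Module

variable {E : Type*} [NormedAddCommGroup E] [InnerProductSpace ℝ E]

/-- The dual lattice `L^∨ = {μ | ⟪μ, l⟫ ∈ ℤ for all l ∈ L}` of a lattice `L` in a Euclidean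
space. -/
noncomputable def dualLattice (L : Submodule ℤ E) : Submodule ℤ E :=
  LinearMap.BilinForm.dualSubmodule (innerₗ E) L

lemma nondegenerate_innerₗ : LinearMap.BilinForm.Nondegenerate (innerₗ E) :=
  ⟨fun x hx ↦ inner_self_eq_zero.mp (hx x), fun x hx ↦ inner_self_eq_zero.mp (hx x)⟩

variable [FiniteDimensional ℝ E] {L : Submodule ℤ E} [DiscreteTopology L] [IsZLattice ℝ L]

variable (L) in
lemma exists_basis_fin_lattice : ∃ r, Nonempty (Basis (Fin r) ℤ L) :=
  have := ZLattice.module_finite ℝ L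
  have := ZLattice.module_free ℝ L
  ⟨_, ⟨finBasis ℤ L⟩⟩

variable {ι : Type*}

section DualBasis

variable [Finite ι] (b : Basis ι ℤ L)

open Classical in
lemma span_dualBasis_eq_dualLattice :
    Submodule.span ℤ (range
      (LinearMap.BilinForm.dualBasis (innerₗ E) nondegenerate_innerₗ (b.ofZLatticeBasis ℝ L))) =
      dualLattice L := by
  rw [← LinearMap.BilinForm.dualSubmodule_span_of_basis, b.ofZLatticeBasis_span ℝ, dualLattice]

instance : DiscreteTopology (dualLattice L) := by
  obtain ⟨r, ⟨b⟩⟩ := exists_basis_fin_lattice L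
  rw [← span_dualBasis_eq_dualLattice b]
  infer_instance

instance : IsZLattice ℝ (dualLattice L) := by
  obtain ⟨r, ⟨b⟩⟩ := exists_basis_fin_lattice L
  simp only [← span_dualBasis_eq_dualLattice b]
  infer_instance

open Classical in
/-- The basis of the dual lattice which is dual to a given basis of the lattice. -/
noncomputable def dualLatticeBasis : Basis ι ℤ (dualLattice L) :=
  ((LinearMap.BilinForm.dualBasis (innerₗ E) nondegenerate_innerₗ
    (b.ofZLatticeBasis ℝ L)).restrictScalars ℤ).map
      (LinearEquiv.ofEq _ _ (span_dualBasis_eq_dualLattice b))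

end DualBasis

variable [Fintype ι] (b : Basis ι ℤ L)

/-- The linear coordinates on a Euclidean space given by a basis of a lattice; they identify
`ℤ^ι` with the lattice. -/
noncomputable def latticeCoord : (ι → ℝ) ≃L[ℝ] E :=
  (b.ofZLatticeBasis ℝ L).equivFun.symm.toContinuousLinearEquiv

lemma latticeCoord_apply (x : ι → ℝ) : latticeCoord b x = ∑ i, x i • (b i : E) := by
  simp [latticeCoord, Basis.equivFun_symm_apply]

lemma latticeCoord_intCast (k : ι → ℤ) :
    latticeCoord b (Int.cast ∘ k) = (b.equivFun.symm k : E) := by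
  simp [latticeCoord_apply, Basis.equivFun_symm_apply, Int.cast_smul_eq_zsmul]

lemma inner_latticeCoord_dualLattice (x : ι → ℝ) (m : ι → ℤ) :
    inner ℝ (latticeCoord b x) ((dualLatticeBasis b).equivFun.symm m : E) =
      ∑ i, (m i : ℝ) * x i := by
  classical
  have inner_dualBasis (i j : ι) :
      inner ℝ (b i : E) (dualLatticeBasis b j : E) = if i = j then 1 else 0 := by
    rw [real_inner_comm, ← b.ofZLatticeBasis_apply ℝ L i]
    simpa [dualLatticeBasis] using
      LinearMap.BilinForm.apply_dualBasis_left nondegenerate_innerₗ (b.ofZLatticeBasis ℝ L) j i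
  simp [latticeCoord_apply, Basis.equivFun_symm_apply, sum_inner, inner_sum, inner_smul_left,
    ← Int.cast_smul_eq_zsmul ℝ, inner_smul_right, inner_dualBasis, mul_comm]

variable [MeasurableSpace E] [BorelSpace E]

lemma integral_comp_latticeCoord {G : Type*} [NormedAddCommGroup G] [NormedSpace ℝ G]
    (g : E → G) : ∫ x, g (latticeCoord b x) = (ZLattice.covolume L)⁻¹ • ∫ x, g x := by
  have covolume_pos := ZLattice.covolume_pos L volume
  have map_volume : Measure.map (latticeCoord b) volume =
      ENNReal.ofReal (ZLattice.covolume L)⁻¹ • (volume : Measure E) := by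
    ext s hs
    rw [Measure.map_apply (latticeCoord b).continuous.measurable hs, Measure.smul_apply,
      smul_eq_mul, ENNReal.ofReal_inv_of_pos covolume_pos, mul_comm, ← div_eq_mul_inv,
      ← ZLattice.volume_image_eq_volume_div_covolume' L b hs.nullMeasurableSet]
    exact congrArg volume ((latticeCoord b).symm.toEquiv.image_eq_preimage_symm s).symm
  calc ∫ x, g (latticeCoord b x)
    _ = ∫ x, g x ∂(Measure.map (latticeCoord b) volume) :=
      ((latticeCoord b).toHomeomorph.measurableEmbedding.integral_map g).symm
    _ = _ := by
      rw [map_volume, integral_smul_measure, ENNReal.toReal_ofReal (by positivity)]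

end DualLattice

section LatticeSum

variable {E F : Type*} [NormedAddCommGroup E] [NormedSpace ℝ E] [FiniteDimensional ℝ E]
  [NormedAddCommGroup F] [NormedSpace ℝ F] (L : Submodule ℤ E) [DiscreteTopology L]

lemma summable_one_add_norm_pow_inv {N : ℕ} (hN : Module.finrank ℤ L < N) :
    Summable fun l : L ↦ ((1 + ‖l‖) ^ N)⁻¹ := by
  refine (ZLattice.summable_norm_pow_inv L N hN).of_norm_bounded_eventually
    ((finite_singleton (0 : L)).subset fun l hl ↦ ?_)
  by_contra l_ne_zero
  have : 0 < ‖l‖ := norm_pos_iff.mpr l_ne_zero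
  refine hl (?_ : ‖((1 + ‖l‖) ^ N)⁻¹‖ ≤ ‖l‖⁻¹ ^ N)
  rw [Real.norm_of_nonneg (by positivity), inv_pow]
  gcongr
  linarith

lemma exists_summable_norm_smul_add_le (f : 𝓢(E, F)) {a : ℝ} (ha : 0 < a) (R : ℝ) :
    ∃ u : L → ℝ, Summable u ∧
      ∀ (l : L) (t : ℝ) (x : E), a ≤ t → ‖x‖ ≤ R → ‖f (t • (l : E) + x)‖ ≤ u l := by
  let N := Module.finrank ℤ L + 1
  let c := 1 + (1 + R) / a
  obtain ⟨C, hC⟩ : ∃ C, ∀ y, (1 + ‖y‖) ^ N * ‖f y‖ ≤ C :=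
    ⟨_, fun y ↦ by
      simpa using
        SchwartzMap.one_add_le_sup_seminorm_apply (𝕜 := ℝ) (m := (N, 0)) le_rfl le_rfl f y⟩
  refine ⟨fun l ↦ c ^ N * C * ((1 + ‖l‖) ^ N)⁻¹,
    (summable_one_add_norm_pow_inv L (Nat.lt_succ_self _)).mul_left _, fun l t x hat hx ↦ ?_⟩
  let y := t • (l : E) + x
  have R_nonneg : 0 ≤ R := (norm_nonneg x).trans hx
  have norm_l_le : a * ‖l‖ ≤ ‖y‖ + R := calc
    a * ‖l‖ ≤ t * ‖l‖ := by gcongr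
    _ = ‖y - x‖ := by
      rw [add_sub_cancel_right, norm_smul, Real.norm_of_nonneg (ha.le.trans hat), L.norm_coe]
    _ ≤ ‖y‖ + R := (norm_sub_le _ _).trans (by gcongr)
  have one_add_le : 1 + ‖l‖ ≤ c * (1 + ‖y‖) := by
    have := (le_div_iff₀' ha).mpr norm_l_le
    have : (‖y‖ + R) / a ≤ (1 + R) / a * (1 + ‖y‖) := by
      rw [div_mul_eq_mul_div]
      gcongr
      nlinarith [norm_nonneg y]
    linarith [norm_nonneg y]
  refine (le_mul_inv_iff₀ (by positivity)).mpr ?_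
  calc ‖f y‖ * (1 + ‖l‖) ^ N
    _ ≤ ‖f y‖ * (c * (1 + ‖y‖)) ^ N := by gcongr
    _ = c ^ N * ((1 + ‖y‖) ^ N * ‖f y‖) := by rw [mul_pow]; ring
    _ ≤ c ^ N * C := by gcongr; exact hC y

/-- The theta series `t ↦ ∑_{l ∈ L} f(t l)` of a Schwartz function `f`. -/
noncomputable def latticeTheta (f : 𝓢(E, F)) (t : ℝ) : F := ∑' l : L, f (t • (l : E))

variable [CompleteSpace F] (f : 𝓢(E, F))

lemma summable_smul_lattice {t : ℝ} (ht : 0 < t) : Summable fun l : L ↦ f (t • (l : E)) := by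
  obtain ⟨u, hu, hfu⟩ := exists_summable_norm_smul_add_le L f ht 0
  exact hu.of_norm_bounded fun l ↦ by simpa using hfu l t 0 le_rfl (by simp)

lemma continuousOn_latticeTheta : ContinuousOn (latticeTheta L f) (Ioi 0) := by
  refine fun t ht ↦ ContinuousAt.continuousWithinAt ?_
  have half_pos : 0 < t / 2 := half_pos ht
  obtain ⟨u, hu, hfu⟩ := exists_summable_norm_smul_add_le L f half_pos 0
  have : ContinuousOn (latticeTheta L f) (Ici (t / 2)) :=
    continuousOn_tsum (fun l ↦ by fun_prop) hu fun l r hr ↦ by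
      simpa using hfu l r 0 hr (by simp)
  exact this.continuousAt (Ici_mem_nhds (half_lt_self ht))

lemma latticeTheta_sub_isBigO (r : ℝ) :
    (fun t ↦ latticeTheta L f t - f 0) =O[atTop] fun t ↦ t ^ r := by
  classical
  obtain ⟨M, hM⟩ := exists_nat_gt (max (Module.finrank ℤ L : ℝ) (-r))
  have summable_inv_pow := ZLattice.summable_norm_pow_inv L M
    (Nat.cast_lt.mp ((le_max_left _ _).trans_lt hM))
  obtain ⟨C, -, hC⟩ := f.decay M 0
  refine Asymptotics.IsBigO.of_bound (C * ∑' l : L, ‖l‖⁻¹ ^ M) ?_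
  filter_upwards [eventually_ge_atTop 1] with t ht
  have t_pos : 0 < t := one_pos.trans_le ht
  have tsum_ne_zero : latticeTheta L f t - f 0 =
      ∑' l : L, if l = 0 then 0 else f (t • (l : E)) := by
    rw [latticeTheta, (summable_smul_lattice L f t_pos).tsum_eq_add_tsum_ite 0]
    simp
  have term_le (l : L) : ‖if l = 0 then 0 else f (t • (l : E))‖ ≤ t ^ r * C * ‖l‖⁻¹ ^ M := by
    have C_nonneg : 0 ≤ C := le_trans (by positivity) (hC 0)
    split_ifs with hl
    · rw [norm_zero]
      positivity
    · have : 0 < ‖l‖ := norm_pos_iff.mpr hl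
      have decay : (t * ‖l‖) ^ M * ‖f (t • (l : E))‖ ≤ C := by
        simpa [norm_smul, abs_of_pos t_pos] using hC (t • (l : E))
      calc ‖f (t • (l : E))‖ ≤ C / (t * ‖l‖) ^ M := (le_div_iff₀' (by positivity)).mpr decay
        _ = t ^ (-M : ℝ) * C * ‖l‖⁻¹ ^ M := by
          rw [Real.rpow_neg t_pos.le, Real.rpow_natCast, mul_pow, inv_pow]
          field_simp
        _ ≤ t ^ r * C * ‖l‖⁻¹ ^ M := by
          gcongr
          linarith [le_max_right (Module.finrank ℤ L : ℝ) (-r)]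
  rw [tsum_ne_zero, Real.norm_of_nonneg (Real.rpow_nonneg t_pos.le r), mul_comm, ← mul_assoc,
    ← tsum_mul_left]
  exact tsum_of_norm_bounded (summable_inv_pow.mul_left _).hasSum term_le

end LatticeSum

section Poisson

open Module

variable {E : Type*} [NormedAddCommGroup E] [InnerProductSpace ℝ E] [FiniteDimensional ℝ E]
  {L : Submodule ℤ E} [DiscreteTopology L] [IsZLattice ℝ L]

lemma mFourier_torusMk_eq_exp_inner {ι : Type*} [Fintype ι] (b : Basis ι ℤ L) (m : ι → ℤ)
    (x : ι → ℝ) :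
    mFourier m (torusMk ι x) = Complex.exp (2 * Real.pi * Complex.I *
      (inner ℝ (latticeCoord b x) ((dualLatticeBasis b).equivFun.symm m : E) : ℝ)) := by
  rw [mFourier_torusMk, inner_latticeCoord_dualLattice]
  push_cast
  rfl

lemma summable_norm_restrict_comp_latticeCoord {F ι : Type*} [NormedAddCommGroup F]
    [NormedSpace ℝ F] [Fintype ι] (b : Basis ι ℤ L) (f : 𝓢(E, F)) (K : Compacts (ι → ℝ)) :
    Summable fun k : ι → ℤ ↦
      ‖(((f : C(E, F)).comp (latticeCoord b : C(ι → ℝ, E))).comp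
        (.addRight (Int.cast ∘ k))).restrict K‖ := by
  obtain ⟨R, R_pos, hR⟩ :=
    (K.isCompact.image (latticeCoord b).continuous).isBounded.exists_pos_norm_le
  obtain ⟨u, hu, hfu⟩ := exists_summable_norm_smul_add_le L f one_pos R
  have bound (l : L) {x : E} (hx : ‖x‖ ≤ R) : ‖f (x + l)‖ ≤ u l := by
    simpa only [one_smul, add_comm] using hfu l 1 x le_rfl hx
  have u_nonneg (l : L) : 0 ≤ u l :=
    (norm_nonneg _).trans (bound l (norm_zero.trans_le R_pos.le))
  refine (b.equivFun.symm.toEquiv.summable_iff.mpr hu).of_nonneg_of_le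
    (fun _ ↦ norm_nonneg _) fun k ↦ (ContinuousMap.norm_le _ (u_nonneg _)).mpr fun x ↦ ?_
  have bound_x := bound (b.equivFun.symm k) (hR _ (mem_image_of_mem _ x.2))
  rwa [← latticeCoord_intCast, ← map_add] at bound_x

variable [MeasurableSpace E] [BorelSpace E]

lemma integral_mFourier_mul_comp_latticeCoord {ι : Type*} [Fintype ι] (b : Basis ι ℤ L)
    (f : E → ℂ) (m : ι → ℤ) :
    ∫ x, mFourier (-m) (torusMk ι x) * f (latticeCoord b x) =
      ((ZLattice.covolume L)⁻¹ : ℝ) * 𝓕 f ((dualLatticeBasis b).equivFun.symm m : E) := by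
  rw [Real.fourier_eq', ← Complex.real_smul, ← integral_comp_latticeCoord b]
  refine integral_congr_ae (ae_of_all _ fun x ↦ ?_)
  simp only [mFourier_torusMk_eq_exp_inner b, map_neg, NegMemClass.coe_neg, inner_neg_right,
    smul_eq_mul]
  congr 2
  push_cast
  ring

theorem tsum_add_lattice_eq_tsum_fourier_dualLattice (f : 𝓢(E, ℂ)) (x : E) :
    ∑' l : L, f (x + l) = ((ZLattice.covolume L)⁻¹ : ℝ) * ∑' μ : dualLattice L,
      𝓕 f (μ : E) * Complex.exp (2 * Real.pi * Complex.I * (inner ℝ x (μ : E) : ℝ)) := by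
  obtain ⟨r, ⟨b⟩⟩ := exists_basis_fin_lattice L
  let g : C(Fin r → ℝ, ℂ) := (f : C(E, ℂ)).comp (latticeCoord b : C(Fin r → ℝ, E))
  let dualEquiv : (Fin r → ℤ) ≃ dualLattice L := (dualLatticeBasis b).equivFun.symm.toEquiv
  have coeff (m : Fin r → ℤ) : ∫ y, mFourier (-m) (torusMk _ y) * g y =
      ((ZLattice.covolume L)⁻¹ : ℝ) * 𝓕 f (dualEquiv m : E) := by
    rw [SchwartzMap.fourier_coe]
    exact integral_mFourier_mul_comp_latticeCoord b f m
  have summable_coeff : Summable fun m : Fin r → ℤ ↦ ∫ y, mFourier (-m) (torusMk _ y) * g y := by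
    have summable_fourier := summable_smul_lattice (dualLattice L) (𝓕 f) one_pos
    simp only [one_smul] at summable_fourier
    simpa only [coeff] using! (dualEquiv.summable_iff.mpr summable_fourier).mul_left _
  let y := (latticeCoord b).symm x
  calc ∑' l : L, f (x + l)
    _ = ∑' k : Fin r → ℤ, g (y + Int.cast ∘ k) := by
      rw [← b.equivFun.symm.toEquiv.tsum_eq]
      refine tsum_congr fun k ↦ congrArg f ?_
      simp only [y, ContinuousMap.coe_coe, map_add, ContinuousLinearEquiv.apply_symm_apply,
        latticeCoord_intCast, LinearEquiv.coe_toEquiv]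
    _ = ∑' m : Fin r → ℤ,
          (∫ z, mFourier (-m) (torusMk _ z) * g z) * mFourier m (torusMk _ y) :=
      tsum_add_intCast_eq_tsum_mFourier (summable_norm_restrict_comp_latticeCoord b f)
        summable_coeff y
    _ = _ := by
      rw [← tsum_mul_left, ← dualEquiv.tsum_eq]
      refine tsum_congr fun m ↦ ?_
      rw [coeff, mFourier_torusMk_eq_exp_inner b, mul_assoc,
        ContinuousLinearEquiv.apply_symm_apply]
      rfl

end Poisson

section FunctionalEquation

open Module

variable {E : Type*} [NormedAddCommGroup E] [InnerProductSpace ℝ E] [FiniteDimensional ℝ E]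
  [MeasurableSpace E] [BorelSpace E]

lemma fourier_comp_inv_smul {G : Type*} [NormedAddCommGroup G] [NormedSpace ℂ G] (f : E → G)
    {t : ℝ} (ht : 0 < t) (w : E) :
    𝓕 (fun x ↦ f (t⁻¹ • x)) w = t ^ finrank ℝ E • 𝓕 f (t • w) := by
  rw [Real.fourier_eq, Real.fourier_eq, ← Measure.integral_comp_inv_smul_of_nonneg _ _ ht.le]
  simp only [inner_smul_left, inner_smul_right, conj_trivial, mul_inv_cancel_left₀ ht.ne']

variable (L : Submodule ℤ E) [DiscreteTopology L] [IsZLattice ℝ L] (f : 𝓢(E, ℂ))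

theorem latticeTheta_inv {t : ℝ} (ht : 0 < t) :
    latticeTheta L f t⁻¹ = ((ZLattice.covolume L)⁻¹ * t ^ finrank ℝ E : ℝ) *
      latticeTheta (dualLattice L) (𝓕 f) t := by
  let dilated : 𝓢(E, ℂ) := SchwartzMap.compCLMOfContinuousLinearEquiv ℂ
    (ContinuousLinearEquiv.smulLeft (Units.mk0 t ht.ne')⁻¹) f
  have dilated_eq : ⇑dilated = fun x ↦ f (t⁻¹ • x) := rfl
  have poisson := tsum_add_lattice_eq_tsum_fourier_dualLattice (L := L) dilated 0
  simpa [SchwartzMap.fourier_coe, dilated_eq, fourier_comp_inv_smul _ ht, tsum_mul_left,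
    latticeTheta, mul_assoc] using poisson

/-- The pair of theta series of `(L, f)` and `(L^∨, 𝓕 f)`, related by the functional equation
`t ↦ 1 / t` of weight `dim E`. -/
noncomputable def latticeThetaFEPair [Nontrivial E] : WeakFEPair ℂ where
  f := latticeTheta L f
  g := latticeTheta (dualLattice L) (𝓕 f)
  k := finrank ℝ E
  ε := ((ZLattice.covolume L)⁻¹ : ℝ)
  f₀ := f 0
  g₀ := 𝓕 f 0
  hf_int := (continuousOn_latticeTheta L f).locallyIntegrableOn measurableSet_Ioi
  hg_int := (continuousOn_latticeTheta _ (𝓕 f)).locallyIntegrableOn measurableSet_Ioi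
  hk := Nat.cast_pos.mpr finrank_pos
  hε := Complex.ofReal_ne_zero.mpr (inv_ne_zero (ZLattice.covolume_ne_zero L volume))
  h_feq t ht := by
    rw [one_div, latticeTheta_inv L f ht, Real.rpow_natCast, Complex.ofReal_mul, smul_eq_mul]
  hf_top := latticeTheta_sub_isBigO L f
  hg_top := latticeTheta_sub_isBigO (dualLattice L) (𝓕 f)

theorem stmt_2_general [Nontrivial E] (hf0 : f 0 = 0) :
    ∃ F : ℂ → ℂ,
      (∀ s : ℂ, finrank ℝ E < s.re →
        IntegrableOn (fun t : ℝ ↦ (∑' l : L, f (t • (l : E))) * (t : ℂ) ^ (s - 1)) (Ioi 0) ∧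
        F s = ∫ t in Ioi (0 : ℝ), (∑' l : L, f (t • (l : E))) * (t : ℂ) ^ (s - 1)) ∧
      AnalyticOnNhd ℂ F {(finrank ℝ E : ℂ)}ᶜ ∧
      AnalyticAt ℂ F 0 ∧
      Tendsto (fun s : ℂ ↦ (s - finrank ℝ E) * F s) (𝓝[≠] (finrank ℝ E : ℂ))
        (𝓝 ((∫ x, f x) / ZLattice.covolume L)) := by
  let P := latticeThetaFEPair L f
  have analytic : AnalyticOnNhd ℂ P.Λ {(finrank ℝ E : ℂ)}ᶜ :=
    DifferentiableOn.analyticOnNhd (fun s hs ↦ (P.differentiableAt_Λ (.inr hf0)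
      (.inl hs)).differentiableWithinAt) isOpen_compl_singleton
  refine ⟨P.Λ, fun s hs ↦ ?_, analytic, analytic 0 ?_, ?_⟩
  · obtain ⟨convergent, mellin_eq⟩ := P.hasMellin hs
    have f₀_eq : P.f₀ = 0 := hf0
    simp only [f₀_eq, sub_zero, MellinConvergent, mellin, smul_eq_mul] at convergent mellin_eq
    simp only [mul_comm _ ((_ : ℂ) ^ (s - 1))]
    exact ⟨convergent, mellin_eq.symm⟩
  · exact (Nat.cast_ne_zero.mpr finrank_pos.ne').symm
  · have fourier_zero : 𝓕 f 0 = ∫ x, f x := by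
      simp [SchwartzMap.fourier_coe, Real.fourier_eq]
    have residue : P.ε • P.g₀ = (∫ x, f x) / ZLattice.covolume L := by
      change ((ZLattice.covolume L)⁻¹ : ℝ) * 𝓕 f 0 = _
      rw [fourier_zero, Complex.ofReal_inv, mul_comm, div_eq_mul_inv]
    exact residue ▸ P.Λ_residue_k

end FunctionalEquation

/-- Let `f : ℝ^n → ℝ` be a Schwartz function with `f 0 = 0` and let
`L ⊂ ℝ^n` be a full-rank lattice.  The function
`s ↦ ∫₀^∞ (Σ_{λ ∈ L} f(tλ)) t^s dt/t`, which converges absolutely for `Re s` large,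
admits a meromorphic continuation `F` to all of `ℂ`: `F` is analytic away from `s = n`
(in particular holomorphic at `s = 0`), and at `s = n` it has at most a simple pole with
residue `f̂(0)/covol(L) = (∫ f)/covol(L)`. -/
theorem stmt_2
    (n : ℕ) (hn : 0 < n)
    (f : SchwartzMap (EuclideanSpace ℝ (Fin n)) ℝ) (hf0 : f 0 = 0)
    (L : Submodule ℤ (EuclideanSpace ℝ (Fin n))) [DiscreteTopology L] [IsZLattice ℝ L] :
    ∃ (F : ℂ → ℂ) (A : ℝ),
      -- F agrees with the absolutely convergent Mellin integral for Re s > A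
      (∀ s : ℂ, A < s.re →
        IntegrableOn
          (fun t : ℝ => ((∑' l : L, f (t • (l : EuclideanSpace ℝ (Fin n))) : ℝ) : ℂ)
            * (t : ℂ) ^ (s - 1)) (Set.Ioi 0) ∧
        F s = ∫ t in Set.Ioi (0:ℝ),
          ((∑' l : L, f (t • (l : EuclideanSpace ℝ (Fin n))) : ℝ) : ℂ) * (t : ℂ) ^ (s - 1)) ∧
      -- meromorphic continuation: analytic away from s = n, in particular at s = 0
      AnalyticOnNhd ℂ F {(n : ℂ)}ᶜ ∧
      AnalyticAt ℂ F 0 ∧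
      -- at most a simple pole at s = n with residue (∫ f)/covol(L)
      Tendsto (fun s : ℂ => (s - (n : ℂ)) * F s) (nhdsWithin (n : ℂ) {(n : ℂ)}ᶜ)
        (nhds (((∫ x, f x) / ZLattice.covolume L volume : ℝ) : ℂ)) := by
  have : Nontrivial (EuclideanSpace ℝ (Fin n)) :=
    Module.nontrivial_of_finrank_pos (R := ℝ) (by simpa using hn)
  obtain ⟨F, hF⟩ := stmt_2_general L (f.postcompCLM Complex.ofRealCLM) (by simp [hf0])
  exact ⟨F, n, by simpa [integral_complex_ofReal, ← Complex.ofReal_tsum] using hF⟩
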